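/- Let (Ω, ℱ, P) be a probability space, T > 0, and let A ⊆ [0, T] × Ω be jointly measurable (with respect to the product of the Lebesgue σ-algebra and ℱ). Define the sojourn time L(s, ω) := ∫₀^s 1_A(r, ω) dr for s ∈ [0, T]. Then for every y ≥ 0: E[(L(T, ·) − y)⁺] = ∫₀^T P{ω : L(s, ω) > y and (s, ω) ∈ A} ds, where z⁺ := max(z, 0). -/

import Mathlib

open MeasureTheory Set Classical
noncomputable section

lemma sojourn_pathwise (T : ℝ) (hT : 0 < T) (f : ℝ → ℝ)
    (hf : ∀ a b : ℝ, IntervalIntegrable f volume a b) (h0 : ∀ r, 0 ≤ f r)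
    (y : ℝ) (hy : 0 ≤ y) :
    max ((∫ r in (0 : ℝ)..T, f r) - y) 0
      = ∫ s in (0 : ℝ)..T, if y < ∫ r in (0 : ℝ)..s, f r then f s else 0 := by
  set L : ℝ → ℝ := fun s => ∫ r in (0 : ℝ)..s, f r with hL
  have hcont : Continuous L := intervalIntegral.continuous_primitive hf 0
  have hsub : ∀ a b, L b - L a = ∫ r in a..b, f r := fun a b =>
    intervalIntegral.integral_interval_sub_left (hf _ _) (hf _ _)
  have hmono : Monotone L := by
    intro a b hab
    have := intervalIntegral.integral_nonneg (μ := volume) hab (fun u _ => h0 u)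
    have := hsub a b
    linarith
  have hL0 : L 0 = 0 := by simp [hL]
  change max (L T - y) 0 = ∫ s in (0 : ℝ)..T, if y < L s then f s else 0
  rcases le_or_gt (L T) y with h | h
  · rw [max_eq_right (by linarith)]
    symm
    rw [intervalIntegral.integral_congr (g := fun _ => 0)]
    · simp
    · intro s hs
      rw [uIcc_of_le hT.le] at hs
      have := hmono hs.2
      simp only
      rw [if_neg (by linarith)]
  · rw [max_eq_left (by linarith)]
    have hK : IsCompact (Icc 0 T ∩ L ⁻¹' {y}) :=
      isCompact_Icc.inter_right (isClosed_singleton.preimage hcont)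
    have hne : (Icc 0 T ∩ L ⁻¹' {y}).Nonempty := by
      obtain ⟨c, hc, hcy⟩ := intermediate_value_Icc hT.le hcont.continuousOn
        (show y ∈ Icc (L 0) (L T) from ⟨by linarith, h.le⟩)
      exact ⟨c, hc, hcy⟩
    obtain ⟨d, ⟨hd, hdy⟩, hmax⟩ := hK.exists_isGreatest hne
    have hdy : L d = y := hdy
    have e1 : ∀ s ∈ uIoc 0 d, (if y < L s then f s else 0) = (fun _ => (0:ℝ)) s := by
      intro s hs
      rw [uIoc_of_le hd.1] at hs
      have := hmono hs.2
      rw [if_neg (by linarith)]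
    have e2 : ∀ s ∈ uIoc d T, (if y < L s then f s else 0) = f s := by
      intro s hs
      rw [uIoc_of_le hd.2] at hs
      have h1 := hmono hs.1.le
      rw [if_pos]
      refine lt_of_le_of_ne (by linarith) fun h2 => ?_
      have := hmax ⟨⟨hd.1.trans hs.1.le, hs.2⟩, h2.symm⟩
      linarith [hs.1]
    rw [← intervalIntegral.integral_add_adjacent_intervals (b := d)
      (IntervalIntegrable.congr (f := fun _ => (0:ℝ)) (fun s hs => (e1 s hs).symm) (by simp))
      (IntervalIntegrable.congr (f := f) (fun s hs => (e2 s hs).symm) (hf _ _)),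
      intervalIntegral.integral_congr_ae (Filter.Eventually.of_forall e1), intervalIntegral.integral_congr_ae (Filter.Eventually.of_forall e2),
      ← hsub, hdy]
    simp

/-- Identity (4.2) of the paper in abstract form: for a jointly measurable set
`A ⊆ [0,T] × Ω` with sojourn time `L(s, ω) = ∫₀^s 1_A(r, ω) dr`, one has
`E[(L(T,·) − y)⁺] = ∫₀^T P{L(s,·) > y and (s,·) ∈ A} ds` for every `y ≥ 0`. -/
theorem sojourn_expectation_identity {Ω : Type*} [MeasurableSpace Ω]
    (μ : Measure Ω) [IsProbabilityMeasure μ]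
    (T : ℝ) (hT : 0 < T)
    (A : Set (ℝ × Ω)) (hA : MeasurableSet A)
    (y : ℝ) (hy : 0 ≤ y) :
    (∫ ω, max ((∫ r in (0 : ℝ)..T, if (r, ω) ∈ A then (1 : ℝ) else 0) - y) 0 ∂μ)
      = ∫ s in (0 : ℝ)..T,
          (μ {ω | y < (∫ r in (0 : ℝ)..s, if (r, ω) ∈ A then (1 : ℝ) else 0)
                ∧ (s, ω) ∈ A}).toReal := by
  have hfi : ∀ ω, ∀ a b : ℝ, IntervalIntegrable
      (fun r => if (r, ω) ∈ A then (1 : ℝ) else 0) volume a b := by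
    intro ω a b
    refine (intervalIntegrable_const (c := (1:ℝ))).mono_fun ?_ ?_
    · exact (Measurable.ite (measurable_prodMk_right hA)
        measurable_const measurable_const).aestronglyMeasurable
    · refine Filter.Eventually.of_forall fun r => ?_
      by_cases h : (r, ω) ∈ A <;> simp [h]
  have hpath := fun ω => sojourn_pathwise T hT (fun r => if (r, ω) ∈ A then (1 : ℝ) else 0)
    (hfi ω) (fun r => by positivity) y hy
  simp_rw [hpath]
  set G : ℝ × Ω → ℝ := fun p => ∫ r, if (0 < r ∧ r ≤ p.1) ∧ (r, p.2) ∈ A then (1:ℝ) else 0 with hG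
  have hGm : Measurable G := by
    have : StronglyMeasurable (fun q : (ℝ × Ω) × ℝ =>
        if (0 < q.2 ∧ q.2 ≤ q.1.1) ∧ (q.2, q.1.2) ∈ A then (1:ℝ) else 0) := by
      refine (Measurable.ite ?_ measurable_const measurable_const).stronglyMeasurable
      refine MeasurableSet.inter (MeasurableSet.inter ?_ ?_) ?_
      · exact measurableSet_lt measurable_const measurable_snd
      · exact measurableSet_le measurable_snd (measurable_fst.comp measurable_fst)
      · exact (measurable_snd.prodMk (measurable_snd.comp measurable_fst)) hA
    exact this.integral_prod_right.measurable
  have hGL : ∀ s, 0 ≤ s → ∀ ω, (∫ r in (0 : ℝ)..s, if (r, ω) ∈ A then (1 : ℝ) else 0)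
      = G (s, ω) := by
    intro s hs ω
    rw [intervalIntegral.integral_of_le hs, ← integral_indicator measurableSet_Ioc]
    refine integral_congr_ae (Filter.Eventually.of_forall fun r => ?_)
    simp only [indicator, mem_Ioc, ite_and]
  set B : Set (ℝ × Ω) := {p | y < G p ∧ p ∈ A} with hB
  have hBm : MeasurableSet B := (measurableSet_lt measurable_const hGm).inter hA
  have hswap : ∫ ω, (∫ s in Ioc 0 T, B.indicator (fun _ => (1:ℝ)) (s, ω)) ∂μ
      = ∫ s in Ioc 0 T, (∫ ω, B.indicator (fun _ => (1:ℝ)) (s, ω) ∂μ) := by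
    refine integral_integral_swap (f := fun ω s => B.indicator (fun _ => (1:ℝ)) (s, ω)) ?_
    have : Integrable (B.indicator (fun _ => (1:ℝ))) ((volume.restrict (Ioc 0 T)).prod μ) :=
      (integrable_const 1).indicator hBm
    exact this.swap
  simp_rw [intervalIntegral.integral_of_le hT.le]
  refine Eq.trans ?_ (hswap.trans ?_)
  · refine integral_congr_ae (Filter.Eventually.of_forall fun ω => ?_)
    refine setIntegral_congr_fun measurableSet_Ioc fun s hs => ?_
    simp only [hGL s hs.1.le ω, indicator, hB, mem_ofPred_eq, ite_and]
  · refine setIntegral_congr_fun measurableSet_Ioc fun s hs => ?_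
    have hset : {ω | y < (∫ r in (0 : ℝ)..s, if (r, ω) ∈ A then (1 : ℝ) else 0) ∧ (s, ω) ∈ A}
        = (fun ω => (s, ω)) ⁻¹' B := by
      ext ω
      simp only [hGL s hs.1.le ω, hB, mem_ofPred_eq, mem_preimage]
    simp only [hset]
    exact integral_indicator_one (measurable_prodMk_left hBm)
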